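/- arXiv:2502.08477 — 8 statements merged into one kernel-verified Lean document; each statement's English description precedes it below -/
import Mathlib

section
/- Let G be a complex function holomorphic on an open neighborhood of 1 with G(1) = 1 and G'(1) = E, where E is real and E > 1. Then there exists δ > 0 and a holomorphic function Π on the open ball B(0,δ) ⊆ ℂ such that: (i) for every z ∈ B(0,δ) the points 1 + z·E^{-t} lie in the domain of the iterates for all sufficiently large t and G^{[t]}(1 + z·E^{-t}) converges to Π(z) uniformly on B(0,δ) as t → ∞; (ii) Π(0) = 1 and Π'(0) = 1; (iii) G(Π(z)) = Π(E·z) for every z with |z| < δ/E (the Poincaré functional equation). -/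
open Filter Metric Topology

/-- The approximants `G^[t] (1 + z / E ^ t)` of the Poincaré function. -/
noncomputable def poincareApprox (G : ℂ → ℂ) (E : ℝ) (t : ℕ) (z : ℂ) : ℂ :=
  G^[t] (1 + z / (E : ℂ) ^ t)

theorem poincareApprox_zero (G : ℂ → ℂ) (E : ℝ) (z : ℂ) :
    poincareApprox G E 0 z = 1 + z := by
  simp [poincareApprox]

theorem poincareApprox_succ (G : ℂ → ℂ) (E : ℝ) (t : ℕ) (z : ℂ) :
    poincareApprox G E (t + 1) z = G (poincareApprox G E t (z / E)) := by
  simp only [poincareApprox, Function.iterate_succ_apply', div_div, pow_succ']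

/-- Near a fixed point at `1`, a holomorphic function is Lipschitz with any constant larger than
the modulus of its derivative, and it agrees with its linearization up to second order. -/
theorem exists_lipschitz_quadratic_bound {G : ℂ → ℂ} {U : Set ℂ} (hU : IsOpen U)
    (h1U : (1 : ℂ) ∈ U) (hG : DifferentiableOn ℂ G U) (hG1 : G 1 = 1) {L : ℝ}
    (hL : ‖deriv G 1‖ < L) :
    ∃ C > (0 : ℝ), ∃ r > (0 : ℝ), ball 1 r ⊆ U ∧
      (∀ u ∈ ball (1 : ℂ) r, ∀ v ∈ ball (1 : ℂ) r, ‖G u - G v‖ ≤ L * ‖u - v‖) ∧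
      ∀ w : ℂ, ‖w‖ < r → ‖G (1 + w) - 1 - deriv G 1 * w‖ ≤ C * ‖w‖ ^ 2 := by
  have hUn : U ∈ 𝓝 (1 : ℂ) := hU.mem_nhds h1U
  lift L to NNReal using (norm_nonneg _).trans hL.le
  have hstrict : HasStrictDerivAt G (deriv G 1) 1 := (hG.analyticAt hUn).hasStrictDerivAt
  obtain ⟨s, hs, hlip⟩ := hstrict.hasStrictFDerivAt.exists_lipschitzOnWith_of_nnnorm_lt
    L (by
      rw [← NNReal.coe_lt_coe]
      simpa using hL)
  have hslope : DifferentiableAt ℂ (dslope G 1) 1 :=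
    ((Complex.differentiableOn_dslope hUn).2 hG).differentiableAt hUn
  obtain ⟨C, hC, hbound⟩ := hslope.isBigO_sub.exists_pos
  obtain ⟨r, hr, hball⟩ := Metric.mem_nhds_iff.1 (inter_mem (inter_mem hUn hs) hbound.bound)
  refine ⟨C, hC, r, hr, fun u hu => (hball hu).1.1, fun u hu v hv => ?_, fun w hw => ?_⟩
  · simpa [dist_eq_norm] using hlip.dist_le_mul u (hball hu).1.2 v (hball hv).1.2
  · have hmem : 1 + w ∈ ball (1 : ℂ) r := by simpa [dist_eq_norm] using hw
    have hd : ‖dslope G 1 (1 + w) - dslope G 1 1‖ ≤ C * ‖1 + w - 1‖ := (hball hmem).2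
    have hdiff : w * dslope G 1 (1 + w) = G (1 + w) - 1 := by
      simpa [hG1] using sub_smul_dslope G 1 (1 + w)
    rw [dslope_same, add_sub_cancel_left] at hd
    rw [← hdiff, mul_comm w, ← sub_mul, norm_mul, sq, ← mul_assoc]
    gcongr

section Estimates

variable {G : ℂ → ℂ} {E L C K r δ : ℝ} {U : Set ℂ}

/-- A point within quadratic distance of `1 + z` lies in a prescribed ball when `z` is small. -/
theorem mem_ball_one_of_norm_sub_le (hKδ : K * δ ≤ 1) (hK : 0 ≤ K) (hδr : 2 * δ ≤ r) {x z : ℂ}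
    (hz : ‖z‖ < δ) (hx : ‖x - 1 - z‖ ≤ K * ‖z‖ ^ 2) : x ∈ ball (1 : ℂ) r := by
  have h1 : K * ‖z‖ ≤ 1 := (mul_le_mul_of_nonneg_left hz.le hK).trans hKδ
  have h2 : K * ‖z‖ ^ 2 ≤ ‖z‖ := by nlinarith [norm_nonneg z]
  have h3 : ‖x - 1‖ ≤ ‖x - 1 - z‖ + ‖z‖ := by
    simpa using norm_add_le (x - 1 - z) z
  rw [mem_ball, dist_eq_norm]
  linarith

theorem norm_div_ofReal (hE : 1 < E) (z : ℂ) : ‖z / (E : ℂ)‖ = ‖z‖ / E := by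
  rw [norm_div, Complex.norm_real, Real.norm_of_nonneg (by linarith)]

theorem norm_div_ofReal_lt (hE : 1 < E) {z : ℂ} (hz : ‖z‖ < δ) : ‖z / (E : ℂ)‖ < δ := by
  rw [norm_div_ofReal hE]
  exact (div_le_self (norm_nonneg z) hE.le).trans_lt hz

theorem norm_poincareApprox_sub_le (hE : 1 < E) (hL : 0 ≤ L) (hK : 0 ≤ K)
    (hLK : L * K + C ≤ K * E ^ 2) (hKδ : K * δ ≤ 1) (hδr : 2 * δ ≤ r)
    (hlip : ∀ u ∈ ball (1 : ℂ) r, ∀ v ∈ ball (1 : ℂ) r, ‖G u - G v‖ ≤ L * ‖u - v‖)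
    (hquad : ∀ w : ℂ, ‖w‖ < r → ‖G (1 + w) - 1 - E * w‖ ≤ C * ‖w‖ ^ 2)
    (t : ℕ) {z : ℂ} (hz : ‖z‖ < δ) :
    ‖poincareApprox G E t z - 1 - z‖ ≤ K * ‖z‖ ^ 2 := by
  induction t generalizing z with
  | zero =>
    rw [poincareApprox_zero, add_sub_cancel_left, sub_self, norm_zero]
    positivity
  | succ t ih =>
    have hE0 : (0 : ℝ) < E := by linarith
    have hEC : (E : ℂ) ≠ 0 := by exact_mod_cast hE0.ne'
    have hzE := norm_div_ofReal_lt hE hz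
    have hu := mem_ball_one_of_norm_sub_le hKδ hK hδr hzE (ih hzE)
    have hwr : ‖z / (E : ℂ)‖ < r := by linarith [norm_nonneg (z / (E : ℂ))]
    have hv : 1 + z / (E : ℂ) ∈ ball (1 : ℂ) r := by simpa [dist_eq_norm] using hwr
    have h1 := hlip _ hu _ hv
    have h2 := hquad _ hwr
    have h3 := mul_le_mul_of_nonneg_left (ih hzE) hL
    rw [mul_div_cancel₀ z hEC] at h2
    rw [← sub_sub] at h1
    rw [poincareApprox_succ]
    calc _ = ‖(G (poincareApprox G E t (z / E)) - G (1 + z / E)) +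
              (G (1 + z / E) - 1 - z)‖ := by congr 1; ring
      _ ≤ _ := norm_add_le _ _
      _ ≤ L * (K * ‖z / (E : ℂ)‖ ^ 2) + C * ‖z / (E : ℂ)‖ ^ 2 := by linarith
      _ = (L * K + C) * ‖z / (E : ℂ)‖ ^ 2 := by ring
      _ ≤ K * E ^ 2 * ‖z / (E : ℂ)‖ ^ 2 := by gcongr
      _ = K * ‖z‖ ^ 2 := by rw [norm_div_ofReal hE]; field_simp

theorem norm_poincareApprox_succ_sub_le (hE : 1 < E) (hL : 0 ≤ L) (hC : 0 ≤ C)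
    (hδr : δ ≤ r)
    (hmem : ∀ (t : ℕ) (z : ℂ), ‖z‖ < δ → poincareApprox G E t z ∈ ball (1 : ℂ) r)
    (hlip : ∀ u ∈ ball (1 : ℂ) r, ∀ v ∈ ball (1 : ℂ) r, ‖G u - G v‖ ≤ L * ‖u - v‖)
    (hquad : ∀ w : ℂ, ‖w‖ < r → ‖G (1 + w) - 1 - E * w‖ ≤ C * ‖w‖ ^ 2)
    (t : ℕ) {z : ℂ} (hz : ‖z‖ < δ) :
    ‖poincareApprox G E t z - poincareApprox G E (t + 1) z‖ ≤ C * ‖z‖ ^ 2 * (L / E ^ 2) ^ t := by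
  induction t generalizing z with
  | zero =>
    have hEC : (E : ℂ) ≠ 0 := by exact_mod_cast (by linarith : (0 : ℝ) < E).ne'
    have hzE := norm_div_ofReal_lt hE hz
    have h2 := hquad _ (hzE.trans_le hδr)
    rw [mul_div_cancel₀ z hEC, norm_div_ofReal hE] at h2
    rw [poincareApprox_succ, poincareApprox_zero, poincareApprox_zero, norm_sub_rev, ← sub_sub,
      pow_zero, mul_one]
    refine h2.trans ?_
    gcongr
    exact div_le_self (norm_nonneg z) hE.le
  | succ t ih =>
    have hzE := norm_div_ofReal_lt hE hz
    have h1 := hlip _ (hmem t _ hzE) _ (hmem (t + 1) _ hzE)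
    rw [poincareApprox_succ G E t, poincareApprox_succ G E (t + 1)]
    refine h1.trans ((mul_le_mul_of_nonneg_left (ih hzE) hL).trans_eq ?_)
    rw [norm_div_ofReal hE]
    ring

theorem differentiableOn_poincareApprox (hE : 1 < E) (hG : DifferentiableOn ℂ G U)
    (hmem : ∀ (t : ℕ) (z : ℂ), ‖z‖ < δ → poincareApprox G E t z ∈ U) (t : ℕ) :
    DifferentiableOn ℂ (poincareApprox G E t) (ball 0 δ) := by
  induction t with
  | zero =>
    rw [funext (poincareApprox_zero G E)]
    fun_prop
  | succ t ih =>
    have hmaps : Set.MapsTo (fun z : ℂ => z / (E : ℂ)) (ball 0 δ) (ball 0 δ) := fun z hz =>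
      mem_ball_zero_iff.2 (norm_div_ofReal_lt hE (mem_ball_zero_iff.1 hz))
    rw [funext (poincareApprox_succ G E t)]
    exact hG.comp (ih.comp (by fun_prop) hmaps) fun z hz =>
      hmem t _ (mem_ball_zero_iff.1 (hmaps hz))

/-- The orbit of `1 + z / E ^ t` consists of approximants at points closer to the origin. -/
theorem iterate_eq_poincareApprox {k t : ℕ} (hkt : k ≤ t) (z : ℂ) :
    G^[k] (1 + z / (E : ℂ) ^ t) = poincareApprox G E k (z / (E : ℂ) ^ (t - k)) := by
  rw [poincareApprox, div_div, ← pow_add, Nat.sub_add_cancel hkt]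

end Estimates

theorem tendstoUniformlyOn_of_norm_sub_succ_le_geometric {F : ℕ → ℂ → ℂ} {s : Set ℂ} {B q : ℝ}
    (hq0 : 0 ≤ q) (hq : q < 1) (hF : ∀ t, ∀ z ∈ s, ‖F t z - F (t + 1) z‖ ≤ B * q ^ t) :
    ∃ f : ℂ → ℂ, TendstoUniformlyOn F f atTop s := by
  have hlim : ∀ z, ∃ y, z ∈ s → Tendsto (fun t => F t z) atTop (𝓝 y) := fun z => by
    by_cases hz : z ∈ s
    · obtain ⟨y, hy⟩ := cauchySeq_tendsto_of_complete
        (cauchySeq_of_le_geometric (f := fun t => F t z) q B hq fun t => by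
          rw [dist_eq_norm]
          exact hF t z hz)
      exact ⟨y, fun _ => hy⟩
    · exact ⟨0, fun h => absurd h hz⟩
  choose f hf using hlim
  refine ⟨f, Metric.tendstoUniformlyOn_iff.2 fun ε hε => ?_⟩
  have hzero : Tendsto (fun t : ℕ => B * q ^ t / (1 - q)) atTop (𝓝 0) := by
    simpa using ((tendsto_pow_atTop_nhds_zero_of_lt_one hq0 hq).const_mul B).div_const (1 - q)
  filter_upwards [hzero.eventually_lt_const hε] with t ht z hz
  rw [dist_comm]
  exact (dist_le_of_le_geometric_of_tendsto q B hq
    (fun n => by rw [dist_eq_norm]; exact hF n z hz) (hf z hz) t).trans_lt ht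

theorem hasDerivAt_one_of_norm_sub_le {f : ℂ → ℂ} {K δ : ℝ} (hδ : 0 < δ) (hf0 : f 0 = 1)
    (hf : ∀ z : ℂ, ‖z‖ < δ → ‖f z - 1 - z‖ ≤ K * ‖z‖ ^ 2) : HasDerivAt f 1 0 := by
  rw [hasDerivAt_iff_isLittleO]
  have hO : (fun z : ℂ => f z - f 0 - (z - 0) • (1 : ℂ)) =O[𝓝 0] fun z : ℂ => (z - 0) ^ 2 := by
    refine Asymptotics.IsBigO.of_bound K ?_
    filter_upwards [ball_mem_nhds (0 : ℂ) hδ] with z hz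
    simpa [hf0] using hf z (mem_ball_zero_iff.1 hz)
  simpa using hO.trans_isLittleO (by
    simpa using (Asymptotics.isLittleO_pow_id (𝕜 := ℂ) one_lt_two))

/-- Existence of the Poincaré function `Π` at the repelling fixed point `1` of `G`:
`Π(z) = lim_{t→∞} G^[t](1 + z/E^t)`, satisfying `Π(0) = 1`, `Π'(0) = 1` and the
Poincaré functional equation `G(Π(z)) = Π(E z)`. -/
theorem stmt0 (G : ℂ → ℂ) (U : Set ℂ) (hU : IsOpen U) (h1U : (1 : ℂ) ∈ U)
    (hG : DifferentiableOn ℂ G U) (hG1 : G 1 = 1)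
    (E : ℝ) (hE : 1 < E) (hG'1 : deriv G 1 = (E : ℂ)) :
    ∃ δ > (0 : ℝ), ∃ Poin : ℂ → ℂ,
      DifferentiableOn ℂ Poin (ball (0 : ℂ) δ) ∧
      -- (i) for large `t` the whole forward orbit of `1 + z/E^t` up to time `t` stays in
      -- the domain `U`, and the iterates converge to `Π` uniformly on the ball
      (∀ᶠ t : ℕ in atTop, ∀ z ∈ ball (0 : ℂ) δ, ∀ k < t,
        G^[k] (1 + z / (E : ℂ) ^ t) ∈ U) ∧
      TendstoUniformlyOn (fun (t : ℕ) (z : ℂ) => G^[t] (1 + z / (E : ℂ) ^ t))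
        Poin atTop (ball (0 : ℂ) δ) ∧
      -- (ii)
      Poin 0 = 1 ∧ deriv Poin 0 = 1 ∧
      -- (iii) the Poincaré functional equation
      (∀ z : ℂ, ‖z‖ < δ / E → G (Poin z) = Poin ((E : ℂ) * z)) := by
  have hE0 : (0 : ℝ) < E := by linarith
  have hEC : (E : ℂ) ≠ 0 := by exact_mod_cast hE0.ne'
  obtain ⟨L, hEL, hLE⟩ : ∃ L, E < L ∧ L < E ^ 2 := exists_between (by nlinarith)
  obtain ⟨C, hC, r, hr, hball, hlip, hquad⟩ := exists_lipschitz_quadratic_bound hU h1U hG hG1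
    (L := L) (by rwa [hG'1, Complex.norm_real, Real.norm_of_nonneg hE0.le])
  rw [hG'1] at hquad
  have hL : 0 ≤ L := by linarith
  have hgap : 0 < E ^ 2 - L := by linarith
  obtain ⟨K, hK, hLK⟩ : ∃ K > 0, L * K + C ≤ K * E ^ 2 :=
    ⟨C / (E ^ 2 - L), by positivity, le_of_eq (by field_simp; ring)⟩
  obtain ⟨δ, hδ, hKδ, hδr⟩ : ∃ δ > 0, K * δ ≤ 1 ∧ 2 * δ ≤ r := by
    refine ⟨min (1 / K) (r / 2), by positivity, ?_, by linarith [min_le_right (1 / K) (r / 2)]⟩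
    calc K * min (1 / K) (r / 2) ≤ K * (1 / K) := by gcongr; exact min_le_left _ _
      _ = 1 := by field_simp
  have hnear (t : ℕ) (z : ℂ) (hz : ‖z‖ < δ) := norm_poincareApprox_sub_le hE hL hK.le hLK hKδ hδr
    hlip hquad t hz
  have hmem (t : ℕ) (z : ℂ) (hz : ‖z‖ < δ) : poincareApprox G E t z ∈ ball (1 : ℂ) r :=
    mem_ball_one_of_norm_sub_le hKδ hK.le hδr hz (hnear t z hz)
  obtain ⟨Poin, hPoin⟩ := tendstoUniformlyOn_of_norm_sub_succ_le_geometric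
    (F := poincareApprox G E) (s := ball 0 δ) (B := C * δ ^ 2) (q := L / E ^ 2) (by positivity)
    ((div_lt_one (by positivity)).2 hLE) fun t z hz => by
      have hz := mem_ball_zero_iff.1 hz
      refine (norm_poincareApprox_succ_sub_le hE hL hC.le (by linarith) hmem hlip hquad t
        hz).trans ?_
      gcongr
  have hlim (z : ℂ) (hz : ‖z‖ < δ) :
      Tendsto (fun t => poincareApprox G E t z) atTop (𝓝 (Poin z)) :=
    hPoin.tendsto_at (mem_ball_zero_iff.2 hz)
  have hPnear (z : ℂ) (hz : ‖z‖ < δ) : ‖Poin z - 1 - z‖ ≤ K * ‖z‖ ^ 2 :=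
    le_of_tendsto' (((hlim z hz).sub_const 1).sub_const z).norm fun t => hnear t z hz
  have hP0 : Poin 0 = 1 := by
    simpa [sub_eq_zero] using hPnear 0 (by simpa using hδ)
  refine ⟨δ, hδ, Poin, ?_, ?_, hPoin, hP0, (hasDerivAt_one_of_norm_sub_le hδ hP0 hPnear).deriv,
    fun z hz => ?_⟩
  · exact hPoin.tendstoLocallyUniformlyOn.differentiableOn (Eventually.of_forall fun t =>
      differentiableOn_poincareApprox hE hG (fun t z hz => hball (hmem t z hz)) t) isOpen_ball
  · refine Eventually.of_forall fun t z hz k hk => hball ?_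
    rw [iterate_eq_poincareApprox hk.le]
    refine hmem k _ (lt_of_le_of_lt ?_ (mem_ball_zero_iff.1 hz))
    rw [norm_div, norm_pow, Complex.norm_real, Real.norm_of_nonneg hE0.le]
    exact div_le_self (norm_nonneg z) (one_le_pow₀ hE.le)
  · have hzδ : ‖z‖ < δ := hz.trans_le (div_le_self hδ.le hE.le)
    have hEz : ‖(E : ℂ) * z‖ < δ := by
      rw [norm_mul, Complex.norm_real, Real.norm_of_nonneg hE0.le, mul_comm]
      exact (lt_div_iff₀ hE0).1 hz
    have hPU : Poin z ∈ U := hball (mem_ball_one_of_norm_sub_le hKδ hK.le hδr hzδ (hPnear z hzδ))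
    have hcont : ContinuousAt G (Poin z) :=
      (hG.differentiableAt (hU.mem_nhds hPU)).continuousAt
    refine tendsto_nhds_unique (hcont.tendsto.comp (hlim z hzδ)) ?_
    refine ((tendsto_add_atTop_iff_nat 1).2 (hlim _ hEz)).congr fun t => ?_
    rw [poincareApprox_succ, mul_div_cancel_left₀ z hEC, Function.comp_apply]
end

section
/- Let G be a complex function holomorphic on an open neighborhood of 0 with G(0) = 0 and G'(0) = r, where 0 < |r| < 1. Then there exists δ > 0 such that G maps the open ball B(0,δ) into itself, and the functions z ↦ r^{-t}·G^{[t]}(z) converge uniformly on B(0,δ) as t → ∞ to a holomorphic function Φ satisfying Φ(0) = 0, Φ'(0) = 1, and the Schröder functional equation Φ(G(z)) = r·Φ(z) for all z ∈ B(0,δ). -/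
open Filter Metric Topology

/-- A function holomorphic at a fixed point `0` agrees with its linear part up to a quadratic
error. -/
theorem exists_norm_sub_deriv_mul_le_sq {G : ℂ → ℂ} {U : Set ℂ} (hU : U ∈ 𝓝 (0 : ℂ))
    (hG : DifferentiableOn ℂ G U) (hG0 : G 0 = 0) :
    ∃ C > (0 : ℝ), ∀ᶠ z in 𝓝 (0 : ℂ), ‖G z - deriv G 0 * z‖ ≤ C * ‖z‖ ^ 2 := by
  have hd : DifferentiableOn ℂ (dslope (dslope G 0) 0) U :=
    (Complex.differentiableOn_dslope hU).2 ((Complex.differentiableOn_dslope hU).2 hG)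
  have hc : ContinuousAt (dslope (dslope G 0) 0) 0 := (hd.differentiableAt hU).continuousAt
  refine ⟨‖dslope (dslope G 0) 0 0‖ + 1, by positivity, ?_⟩
  filter_upwards [hc.norm.eventually_lt_const (lt_add_one _)] with z hz
  have h₁ := sub_smul_dslope G 0 z
  have h₂ := sub_smul_dslope (dslope G 0) 0 z
  simp only [sub_zero, smul_eq_mul, hG0, dslope_same] at h₁ h₂
  have h : G z - deriv G 0 * z = dslope (dslope G 0) 0 z * z ^ 2 := by
    rw [← h₁]
    linear_combination -z * h₂
  rw [h, norm_mul, norm_pow]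
  gcongr

/-- A sequence of functions whose successive differences are dominated on `s` by a summable
sequence converges uniformly on `s`. -/
theorem exists_tendstoUniformlyOn_of_norm_sub_le {α E : Type*} [NormedAddCommGroup E]
    [CompleteSpace E] {F : ℕ → α → E} {u : ℕ → ℝ} {s : Set α} (hu : Summable u)
    (hF : ∀ n, ∀ x ∈ s, ‖F (n + 1) x - F n x‖ ≤ u n) :
    ∃ f : α → E, TendstoUniformlyOn F f atTop s := by
  have h := tendstoUniformlyOn_tsum_nat (f := fun n x => F (n + 1) x - F n x) hu hF
  refine ⟨fun x => F 0 x + ∑' n, (F (n + 1) x - F n x), ?_⟩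
  rw [Metric.tendstoUniformlyOn_iff] at h ⊢
  intro ε hε
  filter_upwards [h ε hε] with n hn x hx
  have := hn x hx
  rw [Finset.sum_range_sub (fun i => F i x)] at this
  rwa [← dist_add_left (F 0 x), add_sub_cancel] at this

/-- Iterates of a map that contracts towards `0` by a factor `c` on a ball. -/
theorem norm_iterate_le_of_norm_le_mul {E : Type*} [SeminormedAddCommGroup E] {G : E → E}
    {c δ : ℝ} (hc : 0 ≤ c) (hmaps : Set.MapsTo G (ball 0 δ) (ball 0 δ))
    (hG : ∀ z ∈ ball (0 : E) δ, ‖G z‖ ≤ c * ‖z‖) (t : ℕ) {z : E} (hz : z ∈ ball (0 : E) δ) :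
    ‖G^[t] z‖ ≤ c ^ t * ‖z‖ := by
  induction t with
  | zero => simp
  | succ t ih =>
    rw [Function.iterate_succ_apply', pow_succ', mul_assoc]
    exact (hG _ (hmaps.iterate t hz)).trans (by gcongr)

/-- Existence of the Koenigs/Schröder linearizer `Φ` at the attracting fixed point `0`
of `G`: `Φ(z) = lim_{t→∞} r^{-t} G^[t](z)`, with `Φ(0) = 0`, `Φ'(0) = 1`, and the
Schröder functional equation `Φ(G(z)) = r·Φ(z)`. -/
theorem stmt1 (G : ℂ → ℂ) (U : Set ℂ) (hU : IsOpen U) (h0U : (0 : ℂ) ∈ U)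
    (hG : DifferentiableOn ℂ G U) (hG0 : G 0 = 0)
    (r : ℂ) (hr0 : 0 < ‖r‖) (hr1 : ‖r‖ < 1) (hG'0 : deriv G 0 = r) :
    ∃ δ > (0 : ℝ), ball (0 : ℂ) δ ⊆ U ∧
      Set.MapsTo G (ball (0 : ℂ) δ) (ball (0 : ℂ) δ) ∧
      ∃ Φ : ℂ → ℂ,
        TendstoUniformlyOn (fun (t : ℕ) (z : ℂ) => r⁻¹ ^ t * G^[t] z)
          Φ atTop (ball (0 : ℂ) δ) ∧
        DifferentiableOn ℂ Φ (ball (0 : ℂ) δ) ∧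
        Φ 0 = 0 ∧ deriv Φ 0 = 1 ∧
        ∀ z ∈ ball (0 : ℂ) δ, Φ (G z) = r * Φ z := by
  obtain ⟨C, hC, hquad⟩ := exists_norm_sub_deriv_mul_le_sq (hU.mem_nhds h0U) hG hG0
  rw [hG'0] at hquad
  obtain ⟨c, hrc, hc⟩ : ∃ c, ‖r‖ < c ∧ c < √‖r‖ :=
    exists_between (Real.lt_sqrt_of_sq_lt (by nlinarith))
  have hc0 : 0 < c := hr0.trans hrc
  have hc2 : c ^ 2 < ‖r‖ := (Real.lt_sqrt hc0.le).1 hc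
  have hc1 : c < 1 := by nlinarith
  have hr : r ≠ 0 := norm_pos_iff.1 hr0
  obtain ⟨ε, hε, hball⟩ := Metric.eventually_nhds_iff_ball.1
    (hquad.and (hU.mem_nhds h0U))
  let δ := min ε ((c - ‖r‖) / C)
  have hδ : 0 < δ := lt_min hε (div_pos (sub_pos.2 hrc) hC)
  have hδε : ball (0 : ℂ) δ ⊆ ball 0 ε := ball_subset_ball (min_le_left _ _)
  have hδU : ball (0 : ℂ) δ ⊆ U := fun z hz => (hball z (hδε hz)).2
  have hcontr : ∀ z ∈ ball (0 : ℂ) δ, ‖G z‖ ≤ c * ‖z‖ := by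
    intro z hz
    have hzδ : ‖z‖ * C ≤ c - ‖r‖ :=
      (le_div_iff₀ hC).1 ((mem_ball_zero_iff.1 hz).le.trans (min_le_right _ _))
    calc ‖G z‖ = ‖(G z - r * z) + r * z‖ := by rw [sub_add_cancel]
      _ ≤ C * ‖z‖ ^ 2 + ‖r‖ * ‖z‖ :=
        (norm_add_le _ _).trans (add_le_add (hball z (hδε hz)).1 (norm_mul_le _ _))
      _ ≤ c * ‖z‖ := by nlinarith [norm_nonneg z]
  have hmaps : Set.MapsTo G (ball (0 : ℂ) δ) (ball (0 : ℂ) δ) := by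
    intro z hz
    rw [mem_ball_zero_iff] at hz ⊢
    exact ((hcontr z (mem_ball_zero_iff.2 hz)).trans
      (mul_le_of_le_one_left (norm_nonneg z) hc1.le)).trans_lt hz
  have hsum : Summable fun t : ℕ => ‖r‖⁻¹ * C * δ ^ 2 * (c ^ 2 / ‖r‖) ^ t :=
    (summable_geometric_of_lt_one (by positivity) ((div_lt_one hr0).2 hc2)).mul_left _
  have hbound : ∀ t : ℕ, ∀ z ∈ ball (0 : ℂ) δ,
      ‖r⁻¹ ^ (t + 1) * G^[t + 1] z - r⁻¹ ^ t * G^[t] z‖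
        ≤ ‖r‖⁻¹ * C * δ ^ 2 * (c ^ 2 / ‖r‖) ^ t := by
    intro t z hz
    have hstep : r⁻¹ ^ (t + 1) * G^[t + 1] z - r⁻¹ ^ t * G^[t] z =
        r⁻¹ ^ (t + 1) * (G (G^[t] z) - r * G^[t] z) := by
      rw [Function.iterate_succ_apply']
      linear_combination r⁻¹ ^ t * G^[t] z * inv_mul_cancel₀ hr
    have hiter : ‖G^[t] z‖ ≤ c ^ t * δ :=
      (norm_iterate_le_of_norm_le_mul hc0.le hmaps hcontr t hz).trans
        (by gcongr; exact (mem_ball_zero_iff.1 hz).le)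
    rw [hstep, norm_mul, norm_pow, norm_inv]
    calc ‖r‖⁻¹ ^ (t + 1) * ‖G (G^[t] z) - r * G^[t] z‖
        ≤ ‖r‖⁻¹ ^ (t + 1) * (C * (c ^ t * δ) ^ 2) := by
          gcongr
          exact (hball _ (hδε (hmaps.iterate t hz))).1.trans (by gcongr)
      _ = ‖r‖⁻¹ * C * δ ^ 2 * (c ^ 2 / ‖r‖) ^ t := by
          rw [div_eq_mul_inv, mul_pow]
          ring
  obtain ⟨Φ, hΦ⟩ := exists_tendstoUniformlyOn_of_norm_sub_le
    (F := fun (t : ℕ) (z : ℂ) => r⁻¹ ^ t * G^[t] z) hsum hbound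
  have h0 : (0 : ℂ) ∈ ball (0 : ℂ) δ := mem_ball_self hδ
  have hdiff : ∀ t : ℕ, DifferentiableOn ℂ (fun z => r⁻¹ ^ t * G^[t] z) (ball (0 : ℂ) δ) :=
    fun t => ((hG.mono hδU).iterate hmaps t).const_mul _
  have hderiv : ∀ t : ℕ, deriv (fun z => r⁻¹ ^ t * G^[t] z) 0 = 1 := by
    intro t
    have hG' : HasDerivAt G r 0 := hG'0 ▸ (hG.differentiableAt (hU.mem_nhds h0U)).hasDerivAt
    rw [((HasDerivAt.iterate 0 hG' hG0 t).const_mul _).deriv, ← mul_pow, inv_mul_cancel₀ hr, one_pow]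
  have hloc := hΦ.tendstoLocallyUniformlyOn
  refine ⟨δ, hδ, hδU, hmaps, Φ, hΦ,
    hloc.differentiableOn (.of_forall hdiff) isOpen_ball, ?_, ?_, fun z hz => ?_⟩
  · refine tendsto_nhds_unique (hΦ.tendsto_at h0) ?_
    simp [Function.iterate_fixed hG0]
  · refine tendsto_nhds_unique
      ((hloc.deriv (.of_forall hdiff) isOpen_ball).tendsto_at h0) ?_
    simp only [Function.comp_apply, hderiv, tendsto_const_nhds]
  · refine tendsto_nhds_unique (hΦ.tendsto_at (hmaps hz)) ?_
    refine (((tendsto_add_atTop_iff_nat 1).2 (hΦ.tendsto_at hz)).const_mul r).congr fun t => ?_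
    rw [Function.iterate_succ_apply]
    linear_combination r⁻¹ ^ t * G^[t] (G z) * inv_mul_cancel₀ hr
end

section
/- Let P, Q be complex polynomials with deg P > deg Q and Q not identically zero, let E be real with E > 1, let ω ∈ ℂ be nonzero, and let Π : ℂ → ℂ satisfy Q(Π(z))·Π(Ez) = P(Π(z)) for all z ≠ ω in some punctured neighborhood of ω. If ‖Π(z)‖ → ∞ as z → ω with z ≠ ω, then ‖Π(w)‖ → ∞ as w → Eω with w ≠ Eω. -/
open Filter Topology

/-- If `deg Q < deg P`, `‖u‖ → ∞` and `Q(u)·v = P(u)` eventually, then `‖v‖ → ∞`. -/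
theorem tendsto_norm_atTop_of_eval_mul_eq_eval {α : Type*} {l : Filter α} {P Q : Polynomial ℂ}
    (hdeg : Q.natDegree < P.natDegree) {u v : α → ℂ}
    (huv : ∀ᶠ z in l, Q.eval (u z) * v z = P.eval (u z))
    (hu : Tendsto (fun z => ‖u z‖) l atTop) :
    Tendsto (fun z => ‖v z‖) l atTop := by
  have hlittle : (fun z => Q.eval (u z)) =o[l] fun z => P.eval (u z) :=
    (Polynomial.isLittleO_cobounded_of_degree_lt
      (Polynomial.degree_lt_degree hdeg)).comp_tendsto
      (tendsto_norm_atTop_iff_cobounded.mp hu)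
  have hP : ∀ᶠ z in l, 0 < ‖P.eval (u z)‖ :=
    (P.tendsto_norm_atTop (Polynomial.natDegree_pos_iff_degree_pos.mp
      (Nat.zero_lt_of_lt hdeg)) hu).eventually_gt_atTop 0
  refine tendsto_atTop.mpr fun M => ?_
  have hM : 0 < |M| + 1 := by positivity
  filter_upwards [huv, hP, hlittle.def (inv_pos.mpr hM)] with z hz hPz hle
  rw [← hz, norm_mul] at hPz hle
  have hQz : 0 < ‖Q.eval (u z)‖ := pos_of_mul_pos_left hPz (norm_nonneg _)
  rw [inv_mul_eq_div, le_div_iff₀ hM] at hle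
  linarith [le_of_mul_le_mul_left hle hQz, le_abs_self M]


/-- Propagation of poles of the Poincaré function: if `deg P > deg Q`,
`Q(Π(z))·Π(Ez) = P(Π(z))` near `ω`, and `Π` blows up at `ω`, then `Π` blows up
at `Eω` as well. -/
theorem stmt6 (P Q : Polynomial ℂ) (hQ : Q ≠ 0) (hdeg : Q.natDegree < P.natDegree)
    (E : ℝ) (hE : 1 < E) (ω : ℂ) (hω : ω ≠ 0) (Poin : ℂ → ℂ)
    (hFE : ∀ᶠ z in 𝓝[≠] ω, Q.eval (Poin z) * Poin ((E : ℂ) * z) = P.eval (Poin z))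
    (hblow : Tendsto (fun z => ‖Poin z‖) (𝓝[≠] ω) atTop) :
    Tendsto (fun w => ‖Poin w‖) (𝓝[≠] ((E : ℂ) * ω)) atTop := by
  have hE0 : (E : ℂ) ≠ 0 := Complex.ofReal_ne_zero.mpr (by linarith)
  have hmap : map (fun z => (E : ℂ) * z) (𝓝[≠] ω) = 𝓝[≠] ((E : ℂ) * ω) :=
    (Homeomorph.mulLeft₀ (E : ℂ) hE0).map_punctured_nhds_eq ω
  rw [← hmap, tendsto_map'_iff]
  exact tendsto_norm_atTop_of_eval_mul_eq_eval hdeg hFE hblow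
end

section
/- Let E > 1 and 0 < r < 1 be real. Then there exists B > 0 such that for every integer n and every natural number m ≥ 1, setting x_m := -m·ln r/ln E > 0 and ρ_{n,m} := √(4π²n² + m²(ln r)²)/ln E, the complex Gamma function satisfies ‖Γ(-(2πin + m·ln r)/ln E)‖ ≥ B · ρ_{n,m}^{x_m - 1} · e^{-x_m} · e^{-π²|n|/ln E}. -/
open Real Complex

theorem integrableOn_cpow_mul_exp_neg_mul_Ioi {a s : ℂ} (ha : 0 < a.re) (hs : 0 < s.re) :
    MeasureTheory.IntegrableOn (fun t : ℝ => (t : ℂ) ^ (a - 1) * Complex.exp (-(s * t)))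
      (Set.Ioi 0) := by
  have hreal := integrableOn_rpow_mul_exp_neg_mul_rpow (p := 1) (s := a.re - 1) (by linarith)
    one_pos hs
  refine MeasureTheory.Integrable.mono' hreal ?_ ?_
  · refine ContinuousOn.aestronglyMeasurable (fun t ht => ContinuousAt.continuousWithinAt ?_)
      measurableSet_Ioi
    exact (Complex.continuousAt_ofReal_cpow_const _ _ (Or.inr (ne_of_gt ht))).mul (by fun_prop)
  · filter_upwards [MeasureTheory.ae_restrict_mem measurableSet_Ioi] with t ht
    rw [norm_mul, Complex.norm_exp, Complex.norm_cpow_eq_rpow_re_of_pos ht]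
    simp

theorem differentiableOn_integral_cpow_mul_exp_neg_mul_Ioi {a : ℂ} (ha : 0 < a.re) :
    DifferentiableOn ℂ
      (fun s : ℂ => ∫ t : ℝ in Set.Ioi 0, (t : ℂ) ^ (a - 1) * Complex.exp (-(s * t)))
      {s | 0 < s.re} := by
  intro s (hs : 0 < s.re)
  have hbound := integrableOn_rpow_mul_exp_neg_mul_rpow (p := 1) (s := a.re) (by linarith)
    one_pos (half_pos hs)
  have hmem : {w : ℂ | s.re / 2 < w.re} ∈ nhds s :=
    (isOpen_lt continuous_const Complex.continuous_re).mem_nhds (half_lt_self hs)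
  refine (hasDerivAt_integral_of_dominated_loc_of_deriv_le hmem
    (μ := MeasureTheory.volume.restrict (Set.Ioi (0 : ℝ)))
    (F := fun w (t : ℝ) => (t : ℂ) ^ (a - 1) * Complex.exp (-(w * t)))
    (F' := fun w (t : ℝ) => (t : ℂ) ^ (a - 1) * (Complex.exp (-(w * t)) * (-t))) ?_
    (integrableOn_cpow_mul_exp_neg_mul_Ioi ha hs) ?_ ?_ hbound
    ?_).2.differentiableAt.differentiableWithinAt
  · filter_upwards [hmem] with w hw
    exact (integrableOn_cpow_mul_exp_neg_mul_Ioi ha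
      ((half_pos hs).trans hw)).aestronglyMeasurable
  · refine ContinuousOn.aestronglyMeasurable (fun t ht => ContinuousAt.continuousWithinAt ?_)
      measurableSet_Ioi
    exact (Complex.continuousAt_ofReal_cpow_const _ _ (Or.inr (ne_of_gt ht))).mul (by fun_prop)
  · filter_upwards [MeasureTheory.ae_restrict_mem measurableSet_Ioi] with t ht w hw
    have ht0 : 0 < t := ht
    have hw' : s.re / 2 < w.re := hw
    rw [norm_mul, norm_mul, Complex.norm_exp, Complex.norm_cpow_eq_rpow_re_of_pos ht, norm_neg,
      Complex.norm_real, Real.norm_of_nonneg ht0.le, Complex.sub_re, Complex.one_re,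
      Real.rpow_sub_one ht0.ne', Real.rpow_one]
    calc _ = t ^ a.re * Real.exp (-(w * t)).re := by field_simp
      _ ≤ _ := by
        gcongr
        simp
        nlinarith
  · refine Filter.Eventually.of_forall fun t w _ => ?_
    have h : HasDerivAt (fun w : ℂ => -(w * t)) (-t) w := by
      simpa using ((hasDerivAt_id' w).mul_const (t : ℂ)).fun_neg
    exact h.cexp.const_mul _

/-- Euler's integral along a rotated ray. -/
theorem integral_cpow_mul_exp_neg_complex_mul_Ioi {a s : ℂ} (ha : 0 < a.re) (hs : 0 < s.re) :
    ∫ t : ℝ in Set.Ioi 0, (t : ℂ) ^ (a - 1) * Complex.exp (-(s * t)) =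
      (1 / s) ^ a * Complex.Gamma a := by
  have hopen : IsOpen {s : ℂ | 0 < s.re} := isOpen_lt continuous_const Complex.continuous_re
  have hleft := (differentiableOn_integral_cpow_mul_exp_neg_mul_Ioi ha).analyticOnNhd hopen
  have hright : AnalyticOnNhd ℂ (fun s : ℂ => (1 / s) ^ a * Complex.Gamma a)
      {s | 0 < s.re} := by
    refine DifferentiableOn.analyticOnNhd (fun w (hw : 0 < w.re) => ?_) hopen
    have hw0 : w ≠ 0 := fun h => by simp [h] at hw
    have hslit : 1 / w ∈ Complex.slitPlane := by
      refine Or.inl ?_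
      rw [one_div, Complex.inv_re]
      exact div_pos hw (Complex.normSq_pos.mpr hw0)
    exact ((((differentiableAt_const _).div differentiableAt_id hw0).cpow
      (differentiableAt_const _) hslit).mul (differentiableAt_const _)).differentiableWithinAt
  refine hleft.eqOn_of_preconnected_of_mem_closure hright
    (convex_halfSpace_re_gt 0).isPreconnected (z₀ := 1) (by simp) ?_ hs
  refine mem_closure_of_tendsto (b := Filter.atTop)
    (f := fun n : ℕ => (1 : ℂ) + 1 / ((n : ℂ) + 1)) ?_ (Filter.Eventually.of_forall fun n => ?_)
  · simpa using tendsto_const_nhds.add (tendsto_one_div_add_atTop_nhds_zero_nat (𝕜 := ℂ))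
  · refine ⟨?_, ?_⟩
    · have := Complex.integral_cpow_mul_exp_neg_mul_Ioi (r := 1 + 1 / ((n : ℝ) + 1)) ha
        (by positivity)
      push_cast at this
      exact this
    · have : (n : ℂ) + 1 ≠ 0 := by exact_mod_cast n.succ_ne_zero
      simpa using this

/-- Rotating the contour in Euler's integral bounds the Gamma function off the real axis. -/
theorem norm_Gamma_le_exp_mul_div_cos_rpow {a : ℂ} (ha : 0 < a.re) {θ : ℝ}
    (hθ : θ ∈ Set.Ioo (-(π / 2)) (π / 2)) :
    ‖Complex.Gamma a‖ ≤ Real.exp (θ * a.im) * (Real.Gamma a.re / Real.cos θ ^ a.re) := by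
  have hcos : 0 < Real.cos θ := Real.cos_pos_of_mem_Ioo hθ
  set s : ℂ := Complex.exp (-(θ * I)) with hs
  have hsre : s.re = Real.cos θ := by
    simp [hs, Complex.exp_re]
  have hint := integral_cpow_mul_exp_neg_complex_mul_Ioi (a := a) (s := s) ha (by rwa [hsre])
  have hinv : (1 / s) ^ a = Complex.exp (θ * I * a) := by
    have h1 : 1 / s = Complex.exp (θ * I) := by rw [hs, Complex.exp_neg, one_div, inv_inv]
    rw [h1, Complex.cpow_def_of_ne_zero (Complex.exp_ne_zero _), Complex.log_exp]
    · simp; linarith [hθ.1, Real.pi_pos]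
    · simp; linarith [hθ.2, Real.pi_pos]
  have hnorm : ‖(1 / s) ^ a‖ = Real.exp (-(θ * a.im)) := by
    rw [hinv, Complex.norm_exp]; simp
  have hle : ‖(1 / s) ^ a * Complex.Gamma a‖ ≤ Real.Gamma a.re / Real.cos θ ^ a.re := by
    rw [← hint]
    refine (MeasureTheory.norm_integral_le_integral_norm _).trans (le_of_eq ?_)
    have hreal := Real.integral_rpow_mul_exp_neg_mul_Ioi ha hcos
    rw [Real.div_rpow zero_le_one hcos.le, Real.one_rpow, one_div_mul_eq_div] at hreal
    rw [← hreal]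
    refine MeasureTheory.setIntegral_congr_fun measurableSet_Ioi fun t ht => ?_
    simp only [norm_mul, Complex.norm_exp]
    rw [Complex.norm_cpow_eq_rpow_re_of_pos ht]
    simp [hsre]
  rw [norm_mul, hnorm, Real.exp_neg] at hle
  rwa [inv_mul_le_iff₀ (Real.exp_pos _)] at hle

theorem norm_Gamma_le_of_one_le_abs_im {a : ℂ} (h1 : 1 ≤ a.re) (h2 : a.re ≤ 2)
    (him : 1 ≤ |a.im|) :
    ‖Complex.Gamma a‖ ≤
      (π / 2) ^ 2 * Real.exp 1 * |a.im| ^ a.re * Real.exp (-(π / 2 * |a.im|)) := by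
  have ha : 0 < a.re := by linarith
  have hpi := Real.pi_gt_three
  set y := |a.im| with hy
  have hy0 : 0 < y := by linarith
  have hε : 0 < 1 / y := by positivity
  have hε1 : 1 / y ≤ 1 := by rw [div_le_one hy0]; exact him
  have key : ‖Complex.Gamma a‖ ≤ Real.exp (-((π / 2 - 1 / y) * y)) *
      (Real.Gamma a.re / Real.sin (1 / y) ^ a.re) := by
    rw [← Real.cos_pi_div_two_sub]
    rcases abs_cases a.im with ⟨h, -⟩ | ⟨h, -⟩
    · have := norm_Gamma_le_exp_mul_div_cos_rpow ha (θ := -(π / 2 - 1 / y))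
        ⟨by linarith, by linarith⟩
      rwa [Real.cos_neg, ← h, ← hy, neg_mul] at this
    · have := norm_Gamma_le_exp_mul_div_cos_rpow ha (θ := π / 2 - 1 / y)
        ⟨by linarith, by linarith⟩
      rwa [show a.im = -y by rw [hy, h, neg_neg], mul_neg] at this
  have hG : Real.Gamma a.re ≤ 1 := by
    have := Real.convexOn_Gamma.le_max_of_mem_Icc (x := 1) (y := 2) (z := a.re)
      (by simp) (by simp) ⟨h1, h2⟩
    simpa using this
  have hsin : 2 / π * (1 / y) ≤ Real.sin (1 / y) := Real.mul_le_sin hε.le (by linarith)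
  have hpow : 1 / Real.sin (1 / y) ^ a.re ≤ (π / 2) ^ 2 * y ^ a.re := by
    calc 1 / Real.sin (1 / y) ^ a.re ≤ 1 / (2 / π * (1 / y)) ^ a.re := by gcongr
      _ = (π / 2 * y) ^ a.re := by
        rw [one_div, ← Real.inv_rpow (by positivity)]; congr 1; field_simp
      _ = (π / 2) ^ a.re * y ^ a.re := Real.mul_rpow (by positivity) hy0.le
      _ ≤ (π / 2) ^ (2 : ℝ) * y ^ a.re := by
        gcongr
        linarith
      _ = _ := by rw [Real.rpow_two]
  have hsin0 : 0 < Real.sin (1 / y) := lt_of_lt_of_le (by positivity) hsin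
  calc ‖Complex.Gamma a‖ ≤ _ := key
    _ ≤ Real.exp (-((π / 2 - 1 / y) * y)) * ((π / 2) ^ 2 * y ^ a.re) := by
      gcongr
      exact (by gcongr : _ ≤ 1 / Real.sin (1 / y) ^ a.re).trans hpow
    _ = _ := by
      rw [show -((π / 2 - 1 / y) * y) = 1 + -(π / 2 * y) by field_simp; ring, Real.exp_add]
      ring

theorem Complex.norm_sin_le_exp_abs_im (z : ℂ) : ‖Complex.sin z‖ ≤ Real.exp |z.im| := by
  have h1 : ‖Complex.exp (-z * I)‖ ≤ Real.exp |z.im| := by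
    rw [Complex.norm_exp]; simpa using le_abs_self z.im
  have h2 : ‖Complex.exp (z * I)‖ ≤ Real.exp |z.im| := by
    rw [Complex.norm_exp]; simpa using neg_le_abs z.im
  have h3 := norm_sub_le (Complex.exp (-z * I)) (Complex.exp (z * I))
  rw [Complex.sin, norm_div, norm_mul, Complex.norm_I, Complex.norm_ofNat]
  linarith

theorem le_norm_Gamma_add_one_of_one_le_abs_im {z : ℂ} (h0 : 0 ≤ z.re) (h1 : z.re ≤ 1)
    (him : 1 ≤ |z.im|) :
    π / ((π / 2) ^ 2 * Real.exp 1) * ‖z‖ ^ z.re * Real.exp (-(π / 2 * |z.im|)) ≤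
      ‖Complex.Gamma (z + 1)‖ := by
  set y := |z.im| with hy
  have hy0 : 0 < y := by linarith
  have him0 : z.im ≠ 0 := abs_pos.mp hy0
  have hz : z ≠ 0 := fun h => him0 (by simp [h])
  have hz1 : 1 - z ≠ 0 := fun h => him0 (by simpa using congrArg Complex.im h)
  have hyz : y ≤ ‖z‖ := Complex.abs_im_le_norm z
  have hyz1 : y ≤ ‖1 - z‖ := by simpa [hy] using Complex.abs_im_le_norm (1 - z)
  have hsin : Complex.sin (π * z) ≠ 0 := by
    rw [Complex.sin_ne_zero_iff]
    intro k hk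
    have := congrArg Complex.im hk
    simp [Real.pi_ne_zero] at this
    exact him0 this
  have hrefl : Complex.Gamma (z + 1) * (Complex.Gamma (1 - z + 1) * Complex.sin (π * z)) =
      π * (z * (1 - z)) := by
    rw [Complex.Gamma_add_one z hz, Complex.Gamma_add_one _ hz1]
    have := Complex.Gamma_mul_Gamma_one_sub z
    rw [eq_div_iff hsin] at this
    linear_combination z * (1 - z) * this
  have hnorm := congrArg norm hrefl
  simp only [norm_mul, Complex.norm_real, Real.norm_eq_abs, abs_of_pos Real.pi_pos] at hnorm
  have hG : ‖Complex.Gamma (1 - z + 1)‖ ≤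
      (π / 2) ^ 2 * Real.exp 1 * y ^ (2 - z.re) * Real.exp (-(π / 2 * y)) := by
    have him' : |(1 - z + 1).im| = y := by simp [hy]
    have hre : (1 - z + 1).re = 2 - z.re := by simp; ring
    have := norm_Gamma_le_of_one_le_abs_im (a := 1 - z + 1) (by linarith) (by linarith)
      (by rwa [him'])
    rwa [him', hre] at this
  have hS : ‖Complex.sin (π * z)‖ ≤ Real.exp (π * y) := by
    have := Complex.norm_sin_le_exp_abs_im (π * z)
    simpa [abs_mul, abs_of_pos Real.pi_pos] using this
  have hprod : ‖Complex.Gamma (1 - z + 1)‖ * ‖Complex.sin (π * z)‖ ≤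
      (π / 2) ^ 2 * Real.exp 1 * y ^ (2 - z.re) * Real.exp (-(π / 2 * y)) * Real.exp (π * y) := by
    gcongr
  have hpow : ‖z‖ ^ z.re * y ^ (2 - z.re) ≤ ‖z‖ * ‖1 - z‖ := by
    have e1 : y ^ (2 - z.re) = y ^ (1 - z.re) * y := by
      rw [← Real.rpow_add_one hy0.ne']; congr 1; ring
    have e2 : ‖z‖ ^ z.re * ‖z‖ ^ (1 - z.re) = ‖z‖ := by
      rw [← Real.rpow_add (by linarith)]; simp
    calc ‖z‖ ^ z.re * y ^ (2 - z.re) = ‖z‖ ^ z.re * y ^ (1 - z.re) * y := by rw [e1, mul_assoc]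
      _ ≤ ‖z‖ ^ z.re * ‖z‖ ^ (1 - z.re) * ‖1 - z‖ := by
        gcongr
      _ = _ := by rw [e2]
  have hD : 0 < (π / 2) ^ 2 * Real.exp 1 * y ^ (2 - z.re) * Real.exp (-(π / 2 * y)) *
      Real.exp (π * y) := by positivity
  refine le_of_mul_le_mul_right ?_ hD
  have hexp : Real.exp (-(π / 2 * y)) * (Real.exp (-(π / 2 * y)) * Real.exp (π * y)) = 1 := by
    rw [← Real.exp_add, ← Real.exp_add]; ring_nf; simp
  calc _ = π * (‖z‖ ^ z.re * y ^ (2 - z.re)) *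
        (Real.exp (-(π / 2 * y)) * (Real.exp (-(π / 2 * y)) * Real.exp (π * y))) := by
        field_simp
    _ ≤ π * (‖z‖ * ‖1 - z‖) := by rw [hexp, mul_one]; gcongr
    _ ≤ _ := by rw [← hnorm]; gcongr

theorem exists_le_norm_Gamma_add_one_of_abs_im_le_one :
    ∃ B > (0 : ℝ), ∀ z : ℂ, 0 ≤ z.re → z.re ≤ 1 → |z.im| ≤ 1 →
      B * ‖z‖ ^ z.re ≤ ‖Complex.Gamma (z + 1)‖ := by
  have hK : IsCompact (Set.Icc (0 : ℝ) 1 ×ℂ Set.Icc (-1 : ℝ) 1) :=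
    isCompact_Icc.reProdIm isCompact_Icc
  have hre : ∀ z : ℂ, 0 ≤ z.re → ∀ m : ℕ, z + 1 ≠ -m := fun z hz m h => by
    have := congrArg Complex.re h
    simp at this
    have : (0 : ℝ) ≤ m := m.cast_nonneg
    linarith
  have hcont : ContinuousOn (fun z : ℂ => ‖Complex.Gamma (z + 1)‖)
      (Set.Icc (0 : ℝ) 1 ×ℂ Set.Icc (-1 : ℝ) 1) := by
    intro z hz
    have h := (Complex.differentiableAt_Gamma (z + 1) (hre z hz.1.1)).continuousAt
    exact (ContinuousAt.comp (f := fun z : ℂ => z + 1) h (by fun_prop)).norm.continuousWithinAt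
  obtain ⟨w, hw, hmin⟩ := hK.exists_isMinOn ⟨0, by simp [Complex.mem_reProdIm]⟩ hcont
  have hpos : 0 < ‖Complex.Gamma (w + 1)‖ :=
    norm_pos_iff.mpr (Complex.Gamma_ne_zero (hre w hw.1.1))
  refine ⟨‖Complex.Gamma (w + 1)‖ / 2, by positivity, fun z h0 h1 him => ?_⟩
  have hz : ‖Complex.Gamma (w + 1)‖ ≤ ‖Complex.Gamma (z + 1)‖ :=
    hmin (Complex.mem_reProdIm.mpr ⟨⟨h0, h1⟩, abs_le.mp him⟩)
  have hn : ‖z‖ ≤ 2 := by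
    have := Complex.norm_le_abs_re_add_abs_im z
    rw [abs_of_nonneg h0] at this
    linarith
  have hp : ‖z‖ ^ z.re ≤ 2 := by
    calc ‖z‖ ^ z.re ≤ 2 ^ z.re := by gcongr
      _ ≤ 2 ^ (1 : ℝ) := Real.rpow_le_rpow_of_exponent_le (by norm_num) h1
      _ = 2 := by simp
  calc _ ≤ ‖Complex.Gamma (w + 1)‖ / 2 * 2 := by gcongr
    _ ≤ _ := by linarith

/-- A Stirling-type lower bound, uniform on the right half plane. -/
theorem exists_stirling_le_norm_Gamma :
    ∃ B > (0 : ℝ), ∀ z : ℂ, 0 < z.re →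
      B * ‖z‖ ^ (z.re - 1) * Real.exp (-z.re) * Real.exp (-(π / 2 * |z.im|)) ≤
        ‖Complex.Gamma z‖ := by
  obtain ⟨B, hB, hsmall⟩ := exists_le_norm_Gamma_add_one_of_abs_im_le_one
  set C := min B (π / ((π / 2) ^ 2 * Real.exp 1)) with hC
  have hC0 : 0 < C := lt_min hB (by positivity)
  refine ⟨C, hC0, ?_⟩
  suffices H : ∀ (k : ℕ) (z : ℂ), 0 < z.re → z.re ≤ k + 1 →
      C * ‖z‖ ^ (z.re - 1) * Real.exp (-z.re) * Real.exp (-(π / 2 * |z.im|)) ≤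
        ‖Complex.Gamma z‖ by
    intro z hz
    exact H ⌈z.re⌉₊ z hz ((Nat.le_ceil _).trans (by linarith))
  have hbase : ∀ z : ℂ, 0 < z.re → z.re ≤ 1 →
      C * ‖z‖ ^ (z.re - 1) * Real.exp (-z.re) * Real.exp (-(π / 2 * |z.im|)) ≤
        ‖Complex.Gamma z‖ := by
    intro z h0 h1
    have hz : z ≠ 0 := fun h => by simp [h] at h0
    have hzn : 0 < ‖z‖ := norm_pos_iff.mpr hz
    have hadd : C * ‖z‖ ^ z.re * Real.exp (-(π / 2 * |z.im|)) ≤ ‖z‖ * ‖Complex.Gamma z‖ := by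
      rw [← norm_mul, ← Complex.Gamma_add_one z hz]
      rcases le_total |z.im| 1 with h | h
      · refine le_trans ?_ (hsmall z h0.le h1 h)
        have : Real.exp (-(π / 2 * |z.im|)) ≤ 1 := Real.exp_le_one_iff.mpr (by
          have : 0 ≤ π / 2 * |z.im| := by positivity
          linarith)
        calc _ ≤ C * ‖z‖ ^ z.re * 1 := by gcongr
          _ ≤ B * ‖z‖ ^ z.re := by
            rw [mul_one]; gcongr; exact min_le_left _ _
      · refine le_trans ?_ (le_norm_Gamma_add_one_of_one_le_abs_im h0.le h1 h)
        gcongr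
        exact min_le_right _ _
    have hexp : Real.exp (-z.re) ≤ 1 := Real.exp_le_one_iff.mpr (by linarith)
    refine le_of_mul_le_mul_left ?_ hzn
    calc _ = C * ‖z‖ ^ z.re * Real.exp (-z.re) * Real.exp (-(π / 2 * |z.im|)) := by
          rw [Real.rpow_sub_one hzn.ne']; field_simp
      _ ≤ C * ‖z‖ ^ z.re * 1 * Real.exp (-(π / 2 * |z.im|)) := by gcongr
      _ ≤ _ := by rwa [mul_one]
  intro k
  induction k with
  | zero => intro z h0 h1; exact hbase z h0 (by simpa using h1)
  | succ k ih =>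
    intro z h0 h1
    rcases le_or_gt z.re 1 with h | h
    · exact hbase z h0 h
    obtain ⟨w, rfl⟩ : ∃ w, z = w + 1 := ⟨z - 1, by ring⟩
    simp only [Complex.add_re, Complex.one_re, Complex.add_im, Complex.one_im, add_zero,
      add_sub_cancel_right] at h h1 ⊢
    push_cast at h1
    have hw0 : 0 < w.re := by linarith
    have hw := ih w hw0 (by linarith)
    have hwne : w ≠ 0 := fun h => by simp [h] at hw0
    have hwn : 0 < ‖w‖ := norm_pos_iff.mpr hwne
    have hstep : ‖w + 1‖ ^ w.re ≤ ‖w‖ ^ w.re * Real.exp 1 := by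
      have hle : ‖w + 1‖ ≤ ‖w‖ * Real.exp (1 / w.re) := by
        have h1 : 1 ≤ ‖w‖ * (1 / w.re) := by
          rw [mul_one_div, one_le_div hw0]
          exact Complex.re_le_norm w
        have h2 := mul_le_mul_of_nonneg_left (Real.add_one_le_exp (1 / w.re)) hwn.le
        have h3 := norm_add_le w 1
        rw [norm_one] at h3
        linarith
      calc ‖w + 1‖ ^ w.re ≤ (‖w‖ * Real.exp (1 / w.re)) ^ w.re := by gcongr
        _ = _ := by
          rw [Real.mul_rpow hwn.le (Real.exp_pos _).le, ← Real.exp_mul,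
            one_div_mul_cancel hw0.ne']
    rw [Complex.Gamma_add_one w hwne, norm_mul]
    calc _ ≤ C * (‖w‖ ^ w.re * Real.exp 1) * Real.exp (-(w.re + 1)) *
          Real.exp (-(π / 2 * |w.im|)) := by gcongr
      _ = ‖w‖ * (C * ‖w‖ ^ (w.re - 1) * Real.exp (-w.re) * Real.exp (-(π / 2 * |w.im|))) := by
        rw [Real.rpow_sub_one hwn.ne', neg_add, Real.exp_add, Real.exp_neg 1]
        field_simp
      _ ≤ _ := by gcongr

/-- Estimate (20) of the paper: a Stirling-type lower bound for the complex Gamma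
function at the points `z = -(2πin + m ln r)/ln E`, whose real part is
`x_m = -m ln r/ln E` and modulus is `ρ_{n,m} = √(4π²n² + m²(ln r)²)/ln E`. -/
theorem stmt11 (E r : ℝ) (hE : 1 < E) (hr0 : 0 < r) (hr1 : r < 1) :
    ∃ B > (0 : ℝ), ∀ (n : ℤ) (m : ℕ), 1 ≤ m →
      B * (Real.sqrt (4 * π ^ 2 * (n : ℝ) ^ 2 + (m : ℝ) ^ 2 * Real.log r ^ 2) /
            Real.log E) ^ (-(m : ℝ) * Real.log r / Real.log E - 1) *
          Real.exp (-(-(m : ℝ) * Real.log r / Real.log E)) *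
          Real.exp (-π ^ 2 * |(n : ℝ)| / Real.log E) ≤
        ‖Complex.Gamma (-(2 * (π : ℂ) * Complex.I * (n : ℂ) +
            (m : ℂ) * (Real.log r : ℂ)) / (Real.log E : ℂ))‖ := by
  obtain ⟨B, hB, hG⟩ := exists_stirling_le_norm_Gamma
  refine ⟨B, hB, fun n m hm => ?_⟩
  have hL : 0 < Real.log E := Real.log_pos hE
  have hl : Real.log r < 0 := Real.log_neg hr0 hr1
  have hm0 : (0 : ℝ) < m := by exact_mod_cast hm
  set w : ℂ := -(2 * (π : ℂ) * Complex.I * (n : ℂ) + (m : ℂ) * (Real.log r : ℂ)) with hw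
  have hwre : w.re = -(m : ℝ) * Real.log r := by simp [hw]
  have hwim : w.im = -(2 * π * n) := by simp [hw]
  have hre : (w / (Real.log E : ℂ)).re = -(m : ℝ) * Real.log r / Real.log E := by
    rw [Complex.div_ofReal_re, hwre]
  have him : |(w / (Real.log E : ℂ)).im| = 2 * π * |(n : ℝ)| / Real.log E := by
    rw [Complex.div_ofReal_im, hwim, abs_div, abs_neg, abs_mul, abs_of_pos hL,
      abs_of_pos Real.two_pi_pos]
  have hnorm : ‖w / (Real.log E : ℂ)‖ =
      Real.sqrt (4 * π ^ 2 * (n : ℝ) ^ 2 + (m : ℝ) ^ 2 * Real.log r ^ 2) / Real.log E := by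
    rw [norm_div, Complex.norm_real, Real.norm_of_nonneg hL.le, Complex.norm_def,
      Complex.normSq_apply, hwre, hwim]
    congr 2
    ring
  have h := hG (w / (Real.log E : ℂ)) (by rw [hre]; exact div_pos (by nlinarith) hL)
  rw [hre, him, hnorm] at h
  convert h using 3
  ring
end

section
/- Let E > 1 and 0 < r < 1 be real, and let K₀, C > 0 and γ > π²/ln E be real constants. Let κ : ℕ → ℂ and θ : ℤ × ℕ → ℂ satisfy |κ_m| ≤ K₀^m and |θ_{n,m}| ≤ C^m·e^{-γ|n|} for all m ≥ 1 and n ∈ ℤ. Then there exist constants A, α, β > 0 such that for all m ≥ 1 and n ∈ ℤ: ‖κ_m·θ_{n,m} / Γ(-(2πin + m·ln r)/ln E)‖ ≤ A·exp(-α·m·ln(m + |n|) − β·|n|). -/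
open Real Complex

/-- The Beta integral is dominated in norm by its value at the real parts. -/
lemma norm_betaIntegral_le (u v : ℂ) :
    ‖betaIntegral u v‖ ≤ ‖betaIntegral (u.re : ℂ) (v.re : ℂ)‖ := by
  have key : ∀ x ∈ Set.Ioo (0 : ℝ) 1, ‖(x : ℂ) ^ (u - 1) * (1 - (x : ℂ)) ^ (v - 1)‖ =
      x ^ (u.re - 1) * (1 - x) ^ (v.re - 1) := by
    intro x hx
    have h1 : (0 : ℝ) < 1 - x := sub_pos.2 hx.2
    rw [norm_mul, Complex.norm_cpow_eq_rpow_re_of_pos hx.1,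
      show (1 - (x : ℂ)) = ((1 - x : ℝ) : ℂ) by push_cast; ring,
      Complex.norm_cpow_eq_rpow_re_of_pos h1]
    simp
  have hreal : betaIntegral (u.re : ℂ) (v.re : ℂ) =
      ((∫ x in (0 : ℝ)..1, ‖(x : ℂ) ^ (u - 1) * (1 - (x : ℂ)) ^ (v - 1)‖ : ℝ) : ℂ) := by
    rw [betaIntegral, ← intervalIntegral.integral_ofReal]
    refine intervalIntegral.integral_congr_Ioo_of_le zero_le_one fun x hx => ?_
    have h1 : (0 : ℝ) ≤ 1 - x := (sub_pos.2 hx.2).le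
    simp only [key x hx]
    push_cast [Complex.ofReal_cpow hx.1.le, Complex.ofReal_cpow h1]
    rfl
  rw [hreal, Complex.norm_real]
  exact (intervalIntegral.norm_integral_le_integral_norm zero_le_one).trans (le_abs_self _)

/-- Lower bound for `Γ` at a sum in terms of its values at the summands. -/
lemma norm_Gamma_mul_Gamma_mul_le {u v : ℂ} (hu : 0 < u.re) (hv : 0 < v.re) :
    ‖Complex.Gamma u‖ * ‖Complex.Gamma v‖ * Real.Gamma (u.re + v.re) ≤
      ‖Complex.Gamma (u + v)‖ * (Real.Gamma u.re * Real.Gamma v.re) := by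
  have h1 := congrArg norm (Complex.Gamma_mul_Gamma_eq_betaIntegral hu hv)
  have h2 := congrArg norm (Complex.Gamma_mul_Gamma_eq_betaIntegral
    (s := (u.re : ℂ)) (t := (v.re : ℂ)) (by simpa using hu) (by simpa using hv))
  rw [← Complex.ofReal_add, Complex.Gamma_ofReal, Complex.Gamma_ofReal, Complex.Gamma_ofReal,
    norm_mul, norm_mul, Complex.norm_real, Complex.norm_real, Complex.norm_real,
    Real.norm_of_nonneg (Real.Gamma_pos_of_pos hu).le,
    Real.norm_of_nonneg (Real.Gamma_pos_of_pos hv).le,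
    Real.norm_of_nonneg (Real.Gamma_pos_of_pos (add_pos hu hv)).le] at h2
  rw [norm_mul, norm_mul] at h1
  rw [h1, h2]
  have h3 := norm_betaIntegral_le u v
  have h4 := (Real.Gamma_pos_of_pos (add_pos hu hv)).le
  calc _ = (‖Complex.Gamma (u + v)‖ * Real.Gamma (u.re + v.re)) * ‖betaIntegral u v‖ := by ring
    _ ≤ (‖Complex.Gamma (u + v)‖ * Real.Gamma (u.re + v.re)) *
        ‖betaIntegral (u.re : ℂ) (v.re : ℂ)‖ := by gcongr
    _ = _ := by ring

lemma norm_Gamma_half_add_sq (y : ℝ) :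
    ‖Complex.Gamma (1 / 2 + y * I)‖ ^ 2 = π / Real.cosh (π * y) := by
  have h := Complex.Gamma_mul_Gamma_one_sub (1 / 2 + y * I)
  have hc : (1 : ℂ) - (1 / 2 + y * I) = (starRingEnd ℂ) (1 / 2 + y * I) := by
    simp [Complex.ext_iff]; norm_num
  have hs : Complex.sin (π * (1 / 2 + y * I)) = (Real.cosh (π * y) : ℂ) := by
    rw [show (π : ℂ) * (1 / 2 + y * I) = ((π * y : ℝ) : ℂ) * I + π / 2 by push_cast; ring,
      Complex.sin_add_pi_div_two, Complex.cos_mul_I, Complex.ofReal_cosh]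
  rw [hc, Complex.Gamma_conj, Complex.mul_conj, hs, Complex.normSq_eq_norm_sq] at h
  exact_mod_cast h

lemma sqrt_pi_mul_exp_le_norm_Gamma_half_add (y : ℝ) :
    √π * Real.exp (-(π * |y| / 2)) ≤ ‖Complex.Gamma (1 / 2 + y * I)‖ := by
  refine le_of_sq_le_sq ?_ (norm_nonneg _)
  rw [norm_Gamma_half_add_sq, mul_pow, Real.sq_sqrt pi_pos.le, ← Real.exp_nat_mul, div_eq_mul_inv]
  have h : Real.cosh (π * y) ≤ Real.exp (π * |y|) := by
    rw [← Real.cosh_abs, abs_mul, abs_of_pos pi_pos, Real.cosh_eq]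
    have : Real.exp (-(π * |y|)) ≤ Real.exp (π * |y|) :=
      Real.exp_le_exp.2 (by have := mul_nonneg pi_pos.le (abs_nonneg y); linarith)
    linarith
  have h' := inv_anti₀ (Real.cosh_pos _) h
  rw [← Real.exp_neg] at h'
  refine mul_le_mul_of_nonneg_left (le_trans (le_of_eq ?_) h') pi_pos.le
  congr 1; push_cast; ring

/-- Lower bound for `Γ` on the right half plane, with the sharp exponential rate in the
imaginary part. -/
lemma exp_mul_Gamma_le_norm_mul_norm_Gamma {z : ℂ} (hz : 0 < z.re) :
    Real.exp (-(π * |z.im| / 2)) * Real.Gamma (z.re + 1) ≤ ‖z‖ * ‖Complex.Gamma z‖ := by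
  have hz0 : z ≠ 0 := fun h => by simp [h] at hz
  have h := norm_Gamma_mul_Gamma_mul_le (u := 1 / 2 + z.im * I) (v := ((z.re + 1 / 2 : ℝ) : ℂ))
    (by simp) (by simp only [ofReal_re]; linarith)
  have hsum : (1 / 2 + z.im * I : ℂ) + ((z.re + 1 / 2 : ℝ) : ℂ) = z + 1 := by
    apply Complex.ext <;> simp; ring
  have hre : (1 / 2 + z.im * I : ℂ).re = 1 / 2 := by simp
  have hG : 0 < Real.Gamma (z.re + 1 / 2) := Real.Gamma_pos_of_pos (by linarith)
  have hG1 : 0 < Real.Gamma (z.re + 1) := Real.Gamma_pos_of_pos (by linarith)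
  rw [hsum, hre, ofReal_re, Complex.Gamma_ofReal, Complex.norm_real, Real.norm_of_nonneg hG.le,
    Complex.Gamma_add_one z hz0, norm_mul, Real.Gamma_one_half_eq,
    show 1 / 2 + (z.re + 1 / 2) = z.re + 1 by ring] at h
  have hpos : 0 < √π * Real.Gamma (z.re + 1 / 2) := mul_pos (Real.sqrt_pos.2 pi_pos) hG
  refine le_of_mul_le_mul_right (le_trans ?_ h) hpos
  calc _ = (√π * Real.exp (-(π * |z.im| / 2))) * Real.Gamma (z.re + 1 / 2) *
        Real.Gamma (z.re + 1) := by ring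
    _ ≤ _ := by gcongr; exact sqrt_pi_mul_exp_le_norm_Gamma_half_add _

lemma exp_mul_log_sub_le_Gamma_add_one {x : ℝ} (hx : 0 < x) :
    Real.exp (x * Real.log x - x) ≤ Real.Gamma (x + 1) := by
  have hint := Real.GammaIntegral_convergent (s := x + 1) (by linarith)
  rw [Real.Gamma_eq_integral (by linarith), add_sub_cancel_right]
  rw [add_sub_cancel_right] at hint
  have hsub : Set.Ioi x ⊆ Set.Ioi 0 := Set.Ioi_subset_Ioi hx.le
  calc Real.exp (x * Real.log x - x) = ∫ t in Set.Ioi x, Real.exp (-t) * x ^ x := by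
        rw [MeasureTheory.integral_mul_const, integral_exp_neg_Ioi, Real.rpow_def_of_pos hx,
          ← Real.exp_add]
        congr 1; ring
    _ ≤ ∫ t in Set.Ioi x, Real.exp (-t) * t ^ x := by
        refine MeasureTheory.setIntegral_mono_on ((integrableOn_exp_neg_Ioi x).mul_const _)
          (hint.mono_set hsub) measurableSet_Ioi fun t ht => ?_
        have : x ≤ t := (Set.mem_Ioi.1 ht).le
        gcongr
    _ ≤ _ := by
        refine MeasureTheory.setIntegral_mono_set hint ?_ hsub.eventuallyLE
        filter_upwards [MeasureTheory.ae_restrict_mem measurableSet_Ioi] with t ht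
        have : 0 < t := ht
        simp only [Pi.zero_apply]; positivity

/-- Upper bound for `1 / Γ` on the right half plane. -/
lemma norm_inv_Gamma_le {z : ℂ} (hz : 0 < z.re) :
    ‖(Complex.Gamma z)⁻¹‖ ≤
      ‖z‖ * Real.exp (π * |z.im| / 2 - z.re * Real.log z.re + z.re) := by
  have h := (mul_le_mul_of_nonneg_left (exp_mul_log_sub_le_Gamma_add_one hz)
    (Real.exp_pos _).le).trans (exp_mul_Gamma_le_norm_mul_norm_Gamma hz)
  rw [← Real.exp_add] at h
  have hG : 0 < ‖Complex.Gamma z‖ := norm_pos_iff.2 (Complex.Gamma_ne_zero_of_re_pos hz)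
  rw [norm_inv, inv_le_iff_one_le_mul₀ hG]
  calc (1 : ℝ) = Real.exp (π * |z.im| / 2 - z.re * Real.log z.re + z.re) *
        Real.exp (-(π * |z.im| / 2) + (z.re * Real.log z.re - z.re)) := by
          rw [← Real.exp_add, ← Real.exp_zero]; congr 1; ring
    _ ≤ Real.exp (π * |z.im| / 2 - z.re * Real.log z.re + z.re) *
        (‖z‖ * ‖Complex.Gamma z‖) := by gcongr
    _ = _ := by ring

lemma mul_log_add_le {t s : ℝ} (ht : 0 < t) (hs : 0 ≤ s) :
    t * Real.log (t + s) ≤ t * Real.log t + s := by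
  have h := Real.log_le_sub_one_of_pos (show 0 < (t + s) / t by positivity)
  rw [Real.log_div (by positivity) ht.ne', add_div, div_self ht.ne'] at h
  have h2 := mul_le_mul_of_nonneg_left h ht.le
  have h3 : t * (1 + s / t - 1) = s := by field_simp; ring
  linarith

/-- A superlinear term `t log t` beats every linear term up to a constant. -/
lemma mul_sub_mul_mul_log_le {q c t : ℝ} (hq : 0 < q) (ht : 0 < t) :
    c * t - q * (t * Real.log t) ≤ q * Real.exp (c / q) := by
  have h := Real.log_le_sub_one_of_pos (show 0 < Real.exp (c / q) / t by positivity)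
  rw [Real.log_div (by positivity) ht.ne', Real.log_exp] at h
  have h2 := mul_le_mul_of_nonneg_left h (mul_pos hq ht).le
  have h3 : q * t * (c / q - Real.log t) = c * t - q * (t * Real.log t) := by field_simp
  have h4 : q * t * (Real.exp (c / q) / t - 1) = q * Real.exp (c / q) - q * t := by field_simp
  have := mul_pos hq ht
  linarith

lemma add_mul_le_mul_exp_add {a b d s : ℝ} (ha : 0 ≤ a) (hb : 0 ≤ b) (hd : 0 < d) (hs : 0 ≤ s) :
    a + b * s ≤ (1 + b / d) * Real.exp (a + d * s) := by
  have h1 : a + b * s ≤ (1 + b / d) * (a + d * s) := by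
    have : (1 + b / d) * (a + d * s) = a + b * s + (b / d * a + d * s) := by field_simp; ring
    have : 0 ≤ b / d * a + d * s := by positivity
    linarith
  have h2 : a + d * s ≤ Real.exp (a + d * s) := by linarith [Real.add_one_le_exp (a + d * s)]
  exact h1.trans (by gcongr)

/-- Estimate (22) of the paper: combining `|κ_m| ≤ K₀^m`, the Fourier coefficient
bounds `|θ_{n,m}| ≤ C^m e^{-γ|n|}` with `γ > π²/ln E`, and the Gamma lower bound,
the terms of the left-tail series decay super-exponentially in `m` and exponentially
in `n`. -/
theorem stmt13 (E r K₀ C γ : ℝ) (hE : 1 < E) (hr0 : 0 < r) (hr1 : r < 1)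
    (hK₀ : 0 < K₀) (hC : 0 < C) (hγ : π ^ 2 / Real.log E < γ)
    (κ : ℕ → ℂ) (θ : ℤ → ℕ → ℂ)
    (hκ : ∀ m : ℕ, 1 ≤ m → ‖κ m‖ ≤ K₀ ^ m)
    (hθ : ∀ (n : ℤ) (m : ℕ), 1 ≤ m → ‖θ n m‖ ≤ C ^ m * Real.exp (-γ * |(n : ℝ)|)) :
    ∃ A > (0 : ℝ), ∃ α > (0 : ℝ), ∃ β > (0 : ℝ), ∀ (m : ℕ), 1 ≤ m → ∀ n : ℤ,
      ‖κ m * θ n m / Complex.Gamma (-(2 * (π : ℂ) * Complex.I * (n : ℂ) +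
          (m : ℂ) * (Real.log r : ℂ)) / (Real.log E : ℂ))‖ ≤
        A * Real.exp (-α * m * Real.log ((m : ℝ) + |(n : ℝ)|) - β * |(n : ℝ)|) := by
  have hL : 0 < Real.log E := Real.log_pos hE
  set L := Real.log E
  obtain ⟨ρ, hρdef⟩ : ∃ ρ, ρ = -Real.log r / L := ⟨_, rfl⟩
  have hρ : 0 < ρ := by
    rw [hρdef]; exact div_pos (neg_pos.2 (Real.log_neg hr0 hr1)) hL
  obtain ⟨δ, hδdef⟩ : ∃ δ, δ = γ - π ^ 2 / L := ⟨_, rfl⟩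
  have hδ : 0 < δ := by rw [hδdef]; exact sub_pos.2 hγ
  obtain ⟨b, hbdef⟩ : ∃ b, b = 2 * π / L := ⟨_, rfl⟩
  have hb : 0 < b := by rw [hbdef]; exact div_pos (by positivity) hL
  obtain ⟨c, hcdef⟩ : ∃ c, c = Real.log (K₀ * C) + 2 * ρ - ρ * Real.log ρ := ⟨_, rfl⟩
  refine ⟨(1 + b / (δ / 4)) * Real.exp (ρ / 2 * Real.exp (c / (ρ / 2))), by positivity,
    min (ρ / 2) (δ / 4), by positivity, δ / 4, by positivity, fun m hm n => ?_⟩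
  have hm0 : (0 : ℝ) < m := by exact_mod_cast hm
  have hm1 : (1 : ℝ) ≤ m := by exact_mod_cast hm
  set z : ℂ := -(2 * (π : ℂ) * Complex.I * (n : ℂ) + (m : ℂ) * (Real.log r : ℂ)) / (L : ℂ)
    with hzdef
  have hz : z = ((ρ * m : ℝ) : ℂ) + ((-(b * n) : ℝ) : ℂ) * I := by
    have : (L : ℂ) ≠ 0 := by exact_mod_cast hL.ne'
    rw [hzdef, hρdef, hbdef]; push_cast; field_simp; ring
  have hzre : z.re = ρ * m := by rw [hz]; simp
  have hzim : |z.im| = b * |(n : ℝ)| := by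
    have : z.im = -(b * n) := by rw [hz]; simp
    rw [this, abs_neg, abs_mul, abs_of_pos hb]
  set s : ℝ := |(n : ℝ)|
  have hs : 0 ≤ s := abs_nonneg _
  have hznorm : ‖z‖ ≤ (1 + b / (δ / 4)) * Real.exp (ρ * m + δ / 4 * s) := by
    refine le_trans ?_ (add_mul_le_mul_exp_add (mul_pos hρ hm0).le hb.le (by positivity) hs)
    have := Complex.norm_le_abs_re_add_abs_im z
    rwa [hzim, hzre, abs_of_pos (mul_pos hρ hm0)] at this
  have hΓ := norm_inv_Gamma_le (z := z) (by rw [hzre]; positivity)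
  rw [hzim, hzre, Real.log_mul hρ.ne' hm0.ne'] at hΓ
  have hKC : K₀ ^ m * C ^ m = Real.exp (m * Real.log (K₀ * C)) := by
    rw [← mul_pow, mul_comm (m : ℝ), Real.exp_mul, Real.exp_log (by positivity),
      Real.rpow_natCast]
  rw [div_eq_mul_inv, norm_mul, norm_mul]
  calc ‖κ m‖ * ‖θ n m‖ * ‖(Complex.Gamma z)⁻¹‖
      ≤ K₀ ^ m * (C ^ m * Real.exp (-γ * s)) *
        ((1 + b / (δ / 4)) * Real.exp (ρ * m + δ / 4 * s) *
          Real.exp (π * (b * s) / 2 - ρ * m * (Real.log ρ + Real.log m) + ρ * m)) := by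
        gcongr
        · exact hκ m hm
        · exact hθ n m hm
        · exact hΓ.trans (by gcongr)
    _ = (1 + b / (δ / 4)) * Real.exp (m * Real.log (K₀ * C) + -γ * s + (ρ * m + δ / 4 * s) +
          (π * (b * s) / 2 - ρ * m * (Real.log ρ + Real.log m) + ρ * m)) := by
        rw [Real.exp_add (_ + _ + _), Real.exp_add (_ * _ + _ * _) (_ * _ + _ * _),
          Real.exp_add (m * Real.log _), ← hKC]
        ring
    _ ≤ (1 + b / (δ / 4)) * Real.exp (ρ / 2 * Real.exp (c / (ρ / 2)) +
          (-min (ρ / 2) (δ / 4) * m * Real.log (m + s) - δ / 4 * s)) := by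
        refine mul_le_mul_of_nonneg_left (Real.exp_le_exp.2 ?_) (by positivity)
        have hα : 0 < min (ρ / 2) (δ / 4) := by positivity
        have hα1 := min_le_left (ρ / 2) (δ / 4)
        have hα2 := min_le_right (ρ / 2) (δ / 4)
        set α := min (ρ / 2) (δ / 4)
        have h1 := mul_le_mul_of_nonneg_left (mul_log_add_le hm0 hs) hα.le
        have h2 := mul_sub_mul_mul_log_le (c := c) (half_pos hρ) hm0
        have h3 := mul_le_mul_of_nonneg_right hα1 (mul_nonneg hm0.le (Real.log_nonneg hm1))
        have h4 := mul_le_mul_of_nonneg_right hα2 hs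
        have h5 : π * (b * s) / 2 = (γ - δ) * s := by rw [hbdef, hδdef]; field_simp; ring
        have h6 : 0 ≤ δ * s := by positivity
        have h7 : c * m = m * Real.log (K₀ * C) + 2 * (ρ * m) - ρ * m * Real.log ρ := by
          rw [hcdef]; ring
        rw [h5]
        linarith
    _ = _ := by rw [Real.exp_add]; ring
end

section
/- Let f be holomorphic on an open neighborhood of 0 in ℂ with f(0) = 0 and f'(0) = 1, and suppose (3 − f(z))·f(z/3) = f(z) + f(z)² for all z in a neighborhood of 0. Let κ_N := f^{(N)}(0)/N! denote the Taylor coefficients of f. Then for every N ≥ 2: (3^{1−N} − 1)·κ_N = ∑_{j=1}^{N−1} κ_j·κ_{N−j}·(1 + 3^{−j}). -/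
open Filter Topology

/-- Rescaling the variable by `c` multiplies the `n`-th derivative by `c ^ n`, with no
smoothness assumption. -/
lemma iteratedDeriv_comp_const_mul_field {𝕜 : Type*} [NontriviallyNormedField 𝕜]
    (f : 𝕜 → 𝕜) (c : 𝕜) (n : ℕ) :
    iteratedDeriv n (fun z => f (c * z)) = fun z => c ^ n * iteratedDeriv n f (c * z) := by
  induction n with
  | zero => simp
  | succ n ih =>
    ext z
    rw [iteratedDeriv_succ, ih, deriv_const_mul_field, deriv_comp_mul_left c (iteratedDeriv n f),
      ← iteratedDeriv_succ, smul_eq_mul, pow_succ, mul_assoc]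

/-- The Taylor coefficients of a product are the Cauchy product of the Taylor coefficients. -/
lemma iteratedDeriv_mul_div_factorial {𝕜 : Type*} [NontriviallyNormedField 𝕜] [CharZero 𝕜]
    {f g : 𝕜 → 𝕜} {x : 𝕜} {n : ℕ} (hf : ContDiffAt 𝕜 n f x) (hg : ContDiffAt 𝕜 n g x) :
    iteratedDeriv n (f * g) x / (n.factorial : 𝕜) =
      ∑ i ∈ Finset.range (n + 1), iteratedDeriv i f x / (i.factorial : 𝕜) *
        (iteratedDeriv (n - i) g x / ((n - i).factorial : 𝕜)) := by
  rw [iteratedDeriv_mul hf hg, Finset.sum_div]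
  refine Finset.sum_congr rfl fun i hi => ?_
  have hin : i ≤ n := Nat.lt_succ_iff.mp (Finset.mem_range.mp hi)
  have hn : (n.factorial : 𝕜) ≠ 0 := Nat.cast_ne_zero.mpr n.factorial_ne_zero
  have hi' : (i.factorial : 𝕜) ≠ 0 := Nat.cast_ne_zero.mpr i.factorial_ne_zero
  have hni : ((n - i).factorial : 𝕜) ≠ 0 := Nat.cast_ne_zero.mpr (n - i).factorial_ne_zero
  rw [Nat.cast_choose 𝕜 hin]
  field_simp

/-- Recurrence (38) for the Taylor coefficients of `f = Φ⁻¹`, the inverse Schröder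
linearizer for `G(z) = (z+z²)/(3−z)`: the functional equation
`(3 − f(z))·f(z/3) = f(z) + f(z)²` yields
`(3^{1−N} − 1)·κ_N = ∑_{j=1}^{N−1} κ_j κ_{N−j} (1 + 3^{−j})` for `N ≥ 2`. -/
theorem stmt15 (f : ℂ → ℂ) (hf : AnalyticAt ℂ f 0) (hf0 : f 0 = 0)
    (hf'0 : deriv f 0 = 1)
    (hFE : ∀ᶠ z in 𝓝 (0 : ℂ), (3 - f z) * f (z / 3) = f z + (f z) ^ 2)
    (κ : ℕ → ℂ) (hκ : ∀ N : ℕ, κ N = iteratedDeriv N f 0 / (N.factorial : ℂ)) :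
    ∀ N : ℕ, 2 ≤ N →
      ((3 : ℂ) ^ (1 - (N : ℤ)) - 1) * κ N =
        ∑ j ∈ Finset.Icc 1 (N - 1), κ j * κ (N - j) * (1 + (3 : ℂ) ^ (-(j : ℤ))) := by
  intro N hN
  set g : ℂ → ℂ := fun z => f (3⁻¹ * z) with hg_def
  have hf_smooth (n : ℕ) : ContDiffAt ℂ n f 0 := hf.contDiffAt
  have hg : AnalyticAt ℂ g 0 :=
    AnalyticAt.fun_comp (f := fun z : ℂ => 3⁻¹ * z) (by simpa using hf) (by fun_prop)
  have hg_smooth (n : ℕ) : ContDiffAt ℂ n g 0 := hg.contDiffAt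
  have hg_coeff (n : ℕ) : iteratedDeriv n g 0 = 3⁻¹ ^ n * iteratedDeriv n f 0 := by
    simp [hg_def, iteratedDeriv_comp_const_mul_field]
  have hFE' : (fun z => 3 * g z) =ᶠ[𝓝 0] f + (f + g) * f := by
    filter_upwards [hFE] with z hz
    simp only [hg_def, Pi.add_apply, Pi.mul_apply]
    rw [div_eq_inv_mul] at hz
    linear_combination hz
  have hfg_smooth : ContDiffAt ℂ N (f + g) 0 := (hf_smooth N).add (hg_smooth N)
  have hmul_smooth : ContDiffAt ℂ N ((f + g) * f) 0 := hfg_smooth.mul (hf_smooth N)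
  have hκ0 : κ 0 = 0 := by simp [hκ, hf0]
  have hcoeff := congrArg (· / (N.factorial : ℂ)) (hFE'.iteratedDeriv_eq N)
  simp only [iteratedDeriv_const_mul_field] at hcoeff
  rw [iteratedDeriv_add (hf_smooth N) hmul_smooth, add_div,
    iteratedDeriv_mul_div_factorial hfg_smooth (hf_smooth N), hg_coeff] at hcoeff
  have hterm (i : ℕ) : iteratedDeriv i (f + g) 0 / (i.factorial : ℂ) =
      κ i * (1 + (3 : ℂ) ^ (-(i : ℤ))) := by
    rw [iteratedDeriv_add (hf_smooth i) (hg_smooth i), hg_coeff, hκ, zpow_neg, zpow_natCast,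
      inv_pow]
    ring
  simp only [hterm, ← hκ] at hcoeff
  obtain ⟨M, rfl⟩ : ∃ M, N = M + 1 := ⟨N - 1, by omega⟩
  rw [Finset.sum_range_succ, Finset.range_eq_Ico, Finset.sum_eq_sum_Ico_succ_bot (by omega),
    Nat.sub_self, hκ0] at hcoeff
  have hpow : (3 : ℂ) ^ (1 - ((M + 1 : ℕ) : ℤ)) = 3 * 3⁻¹ ^ (M + 1) := by
    rw [zpow_sub₀ (by norm_num), zpow_one, zpow_natCast, inv_pow, div_eq_mul_inv]
  have hIcc : Finset.Icc 1 (M + 1 - 1) = Finset.Ico (0 + 1) (M + 1) := by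
    ext; simp
  have hκM := hκ (M + 1)
  rw [hpow, hIcc, Finset.sum_congr rfl fun j _ => mul_right_comm (κ j) (κ (M + 1 - j)) _]
  linear_combination hcoeff + 3 * 3⁻¹ ^ (M + 1) * hκM
end

section
/- Let Π : ℂ → ℂ and let ω ∈ ℂ be nonzero. Suppose Π is holomorphic at ω/2 with Π(ω/2) = 3 and Π'(ω/2) ≠ 0, and suppose Π(2z)·(3 − Π(z)) = Π(z) + Π(z)² for all z ≠ ω/2 in some punctured neighborhood of ω/2. Then lim_{w → ω, w ≠ ω} (w − ω)·Π(w) = −24 / Π'(ω/2); in particular Π has a simple pole at ω with residue −24/Π'(ω/2). -/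
open Filter Topology

/-- Residue formula (36) of the paper (primary poles): for the Poincaré function of
`G(z) = (z+z²)/(3−z)` (so `Π(2z)(3 − Π(z)) = Π(z) + Π(z)²`), if `Π(ω/2) = 3` and
`Π'(ω/2) ≠ 0` then `Π` has a simple pole at `ω` with residue `−24/Π'(ω/2)`. -/
theorem stmt18 (Poin : ℂ → ℂ) (ω : ℂ) (hω : ω ≠ 0)
    (hA : AnalyticAt ℂ Poin (ω / 2)) (hval : Poin (ω / 2) = 3)
    (hder : deriv Poin (ω / 2) ≠ 0)
    (hFE : ∀ᶠ z in 𝓝[≠] (ω / 2), Poin (2 * z) * (3 - Poin z) = Poin z + (Poin z) ^ 2) :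
    Tendsto (fun w => (w - ω) * Poin w) (𝓝[≠] ω)
      (𝓝 (-24 / deriv Poin (ω / 2))) := by
  have hslope := hA.differentiableAt.hasDerivAt.tendsto_slope
  have hP : Tendsto Poin (𝓝[≠] (ω / 2)) (𝓝 3) :=
    hval ▸ hA.continuousAt.tendsto.mono_left nhdsWithin_le_nhds
  have hlim : Tendsto (fun z => -2 * (Poin z + Poin z ^ 2) / slope Poin (ω / 2) z)
      (𝓝[≠] (ω / 2)) (𝓝 (-24 / deriv Poin (ω / 2))) := by
    have h := ((hP.add (hP.pow 2)).const_mul (-2)).div hslope hder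
    norm_num at h ⊢
    exact h
  have hhalf : Tendsto (fun w : ℂ => w / 2) (𝓝[≠] ω) (𝓝[≠] (ω / 2)) :=
    (continuous_id.div_const 2).continuousAt.tendsto.inf <| tendsto_principal_principal.2
      fun w hw h => hw ((div_left_inj' two_ne_zero).1 h)
  have hres : Tendsto (fun z => (2 * z - ω) * Poin (2 * z)) (𝓝[≠] (ω / 2))
      (𝓝 (-24 / deriv Poin (ω / 2))) := by
    refine hlim.congr' ?_
    filter_upwards [hFE, hslope.eventually_ne hder] with z hz hs
    have hsl : (z - ω / 2) * slope Poin (ω / 2) z = Poin z - 3 := by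
      simpa [hval] using sub_smul_slope Poin (ω / 2) z
    rw [div_eq_iff hs]
    linear_combination 2 * hz - 2 * Poin (2 * z) * hsl
  refine (hres.comp hhalf).congr fun w => ?_
  simp [mul_div_cancel₀]
end

section
/- Let Π : ℂ → ℂ, let ω ∈ ℂ be nonzero, and let R ∈ ℂ with R ≠ 0. Suppose Π(2z)·(3 − Π(z)) = Π(z) + Π(z)² for all z ≠ ω in some punctured neighborhood of ω, that ‖Π(z)‖ → ∞ as z → ω with z ≠ ω, and that lim_{z → ω, z ≠ ω} (z − ω)·Π(z) = R. Then lim_{w → 2ω, w ≠ 2ω} (w − 2ω)·Π(w) = −2R; in particular Π has a simple pole at 2ω with residue −2·R. -/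
open Filter Topology

/-- Residue propagation (formula (36), case `k = 1`): for the Poincaré function of
`G(z) = (z+z²)/(3−z)` (so `Π(2z)(3 − Π(z)) = Π(z) + Π(z)²`), if `Π` has a simple pole
at `ω` with residue `R ≠ 0`, then `Π` has a simple pole at `2ω` with residue `−2R`. -/
theorem stmt19 (Poin : ℂ → ℂ) (ω : ℂ) (hω : ω ≠ 0) (R : ℂ) (hR : R ≠ 0)
    (hFE : ∀ᶠ z in 𝓝[≠] ω, Poin (2 * z) * (3 - Poin z) = Poin z + (Poin z) ^ 2)
    (hblow : Tendsto (fun z => ‖Poin z‖) (𝓝[≠] ω) atTop)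
    (hres : Tendsto (fun z => (z - ω) * Poin z) (𝓝[≠] ω) (𝓝 R)) :
    Tendsto (fun w => (w - 2 * ω) * Poin w) (𝓝[≠] (2 * ω)) (𝓝 (-2 * R)) := by
  have hd : Tendsto (fun z => z - ω) (𝓝[≠] ω) (𝓝 0) := by
    have h : Tendsto (fun z => z - ω) (𝓝 ω) (𝓝 (ω - ω)) := tendsto_id.sub_const ω
    rw [sub_self] at h
    exact h.mono_left nhdsWithin_le_nhds
  have hden : Tendsto (fun z => 3 * (z - ω) - (z - ω) * Poin z) (𝓝[≠] ω) (𝓝 (-R)) := by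
    simpa using (hd.const_mul 3).sub hres
  have hquot : Tendsto (fun z => 2 * ((z - ω) * Poin z) *
      (((z - ω) + (z - ω) * Poin z) / (3 * (z - ω) - (z - ω) * Poin z)))
      (𝓝[≠] ω) (𝓝 (-2 * R)) := by
    have hlim : -2 * R = 2 * R * ((0 + R) / -R) := by
      field_simp
      ring
    rw [hlim]
    exact (hres.const_mul 2).mul ((hd.add hres).div hden (neg_ne_zero.mpr hR))
  have hdouble : Tendsto (fun z => (2 * z - 2 * ω) * Poin (2 * z)) (𝓝[≠] ω) (𝓝 (-2 * R)) := by
    refine hquot.congr' ?_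
    filter_upwards [hFE, hden.eventually_ne (neg_ne_zero.mpr hR)] with z hz hne
    rw [mul_div_assoc', div_eq_iff hne]
    linear_combination -2 * (z - ω) ^ 2 * hz
  have hhalf : Tendsto (fun w : ℂ => w / 2) (𝓝[≠] (2 * ω)) (𝓝[≠] ω) := by
    refine tendsto_nhdsWithin_iff.mpr ⟨?_, ?_⟩
    · have h : Tendsto (fun w : ℂ => w / 2) (𝓝 (2 * ω)) (𝓝 (2 * ω / 2)) :=
        tendsto_id.div_const 2
      rw [mul_div_cancel_left₀ ω two_ne_zero] at h
      exact h.mono_left nhdsWithin_le_nhds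
    · filter_upwards [self_mem_nhdsWithin] with w hw h
      exact hw ((div_eq_iff two_ne_zero).mp h |>.trans (mul_comm ω 2))
  refine (hdouble.comp hhalf).congr fun w => ?_
  simp only [Function.comp_apply, mul_div_cancel₀ w (two_ne_zero : (2 : ℂ) ≠ 0)]
end
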